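/- Let C be a singly even self-dual code of length n and let t ∈ 𝔽₂ⁿ be a vector of odd Hamming weight. Let C⁰ be the subcode of C consisting of all codewords orthogonal to t, and let C¹, C², C³ be the cosets of C⁰ such that (C⁰)⊥ = C⁰ ∪ C¹ ∪ C² ∪ C³, C = C⁰ ∪ C², and t + C = C¹ ∪ C³. Then the code C⁺(t) = ((0,0) × C⁰) ∪ ((1,1) × C²) ∪ ((0,1) × C¹) ∪ ((1,0) × C³) ⊆ 𝔽₂^{n+2} (where (a,b) × D denotes the set of vectors of length n+2 whose first two coordinates are a, b and whose remaining n coordinates form a vector of D) is a self-dual code of length n + 2. -/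

import Mathlib

open Finset

/-- Hamming weight of a binary vector. -/
def wt {n : ℕ} (x : Fin n → ZMod 2) : ℕ := hammingNorm x

/-- The dual of a set of binary vectors with respect to the standard inner product. -/
def dualSet {n : ℕ} (C : Set (Fin n → ZMod 2)) : Set (Fin n → ZMod 2) :=
  {x | ∀ y ∈ C, ∑ i, x i * y i = 0}

/-- A binary linear code is self-dual if it equals its dual code. -/
def IsSelfDual {n : ℕ} (C : Submodule (ZMod 2) (Fin n → ZMod 2)) : Prop :=
  (C : Set (Fin n → ZMod 2)) = dualSet (C : Set (Fin n → ZMod 2))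

/-- A self-dual code is singly even if some codeword has weight not divisible by 4. -/
def IsSinglyEvenSelfDual {n : ℕ} (C : Submodule (ZMod 2) (Fin n → ZMod 2)) : Prop :=
  IsSelfDual C ∧ ∃ x ∈ C, ¬ (4 ∣ wt x)

/-- The doubly even subcode `C₀` of `C` (as a set): codewords of weight ≡ 0 (mod 4). -/
def evenSub {n : ℕ} (C : Submodule (ZMod 2) (Fin n → ZMod 2)) : Set (Fin n → ZMod 2) :=
  {x | x ∈ C ∧ 4 ∣ wt x}

/-- The shadow `S = C₀^⊥ \ C` of a singly even self-dual code. -/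
def shadow {n : ℕ} (C : Submodule (ZMod 2) (Fin n → ZMod 2)) : Set (Fin n → ZMod 2) :=
  dualSet (evenSub C) \ (C : Set (Fin n → ZMod 2))

/-- The minimum (nonzero) weight of a set of vectors. -/
noncomputable def minWtSet {n : ℕ} (S : Set (Fin n → ZMod 2)) : ℕ :=
  sInf {w | ∃ x ∈ S, x ≠ 0 ∧ wt x = w}

/-- The minimum weight of a code. -/
noncomputable def minWt {n : ℕ} (C : Submodule (ZMod 2) (Fin n → ZMod 2)) : ℕ :=
  minWtSet (C : Set (Fin n → ZMod 2))

/-- A singly even self-dual code of length `n` is s-extremal if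
`d(S) = n/2 + 4 - 2 d(C)`. -/
def IsSExtremal {n : ℕ} (C : Submodule (ZMod 2) (Fin n → ZMod 2)) : Prop :=
  IsSinglyEvenSelfDual C ∧
    (minWtSet (shadow C) : ℤ) = ((n / 2 : ℕ) : ℤ) + 4 - 2 * (minWt C : ℤ)

/-- Two codes are equivalent if one is obtained from the other by permuting coordinates. -/
def CodeEquiv {n : ℕ} (C D : Submodule (ZMod 2) (Fin n → ZMod 2)) : Prop :=
  ∃ σ : Equiv.Perm (Fin n),
    Submodule.map (LinearMap.funLeft (ZMod 2) (ZMod 2) σ) C = D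

/-- The neighbor `C₀ ∪ (t + C₀)` of `C` obtained from a shadow vector `t`:
the span of the doubly even subcode together with `t`. -/
def neighborCode {n : ℕ} (C : Submodule (ZMod 2) (Fin n → ZMod 2))
    (t : Fin n → ZMod 2) : Submodule (ZMod 2) (Fin n → ZMod 2) :=
  Submodule.span (ZMod 2) (evenSub C ∪ {t})

/-- A set of binary vectors is a self-dual code if it equals its dual
(this forces it to be a linear subspace). -/
def IsSelfDualSet {n : ℕ} (S : Set (Fin n → ZMod 2)) : Prop := S = dualSet S

/-- The subcode `C⁰` of `C` of codewords orthogonal to `t`. -/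
def orthSub {n : ℕ} (C : Submodule (ZMod 2) (Fin n → ZMod 2)) (t : Fin n → ZMod 2) :
    Set (Fin n → ZMod 2) :=
  {c | c ∈ C ∧ ∑ i, t i * c i = 0}

/-- `(a, b) × D`: vectors of length `n + 2` whose first two coordinates are `a, b` and
whose remaining coordinates form a vector of `D`. -/
def ext2 {n : ℕ} (a b : ZMod 2) (D : Set (Fin n → ZMod 2)) : Set (Fin (n + 2) → ZMod 2) :=
  (fun x => Fin.cons a (Fin.cons b x)) '' D

/-!
Since `C` is self-dual it contains the all-ones vector, whose inner product with `t` is `1`. Hence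
the two cosets of `C⁰` in `C`, and likewise the two in `t + C`, are told apart by their inner
product with `t`. If `e` is the value on `C¹`, then `C⁺(t)` consists of the vectors `(a, b, x)` with
`x - (a + b)t ∈ C` and `t ⬝ᵥ x = a + (a + b)e`. Two such vectors are orthogonal: expand the product
of `x - (a + b)t` and `x' - (a' + b')t`, which vanishes since both lie in `C`. Conversely,
orthogonality of `(a, b, x)` to all `(t ⬝ᵥ c, t ⬝ᵥ c, c)` with `c ∈ C` puts `x - (a + b)t` into
`C⊥ = C`, and orthogonality to a single vector `(0, 1, w)` of the code determines `t ⬝ᵥ x`.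
-/

section Duality

variable {n : ℕ}

theorem dotProduct_one_eq_dotProduct_self {ι : Type*} [Fintype ι] (x : ι → ZMod 2) :
    x ⬝ᵥ 1 = x ⬝ᵥ x := by
  have mul_one_eq_mul_self : ∀ a : ZMod 2, a * 1 = a * a := by decide
  exact Finset.sum_congr rfl fun i _ => mul_one_eq_mul_self (x i)

theorem dotProduct_self_eq_wt (x : Fin n → ZMod 2) : x ⬝ᵥ x = (wt x : ZMod 2) := by
  have mul_self_eq_ite : ∀ a : ZMod 2, a * a = if a ≠ 0 then 1 else 0 := by decide
  simp only [dotProduct, wt, hammingNorm, mul_self_eq_ite, Finset.sum_boole]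

theorem dotProduct_self_eq_one_iff_odd_wt {x : Fin n → ZMod 2} : x ⬝ᵥ x = 1 ↔ Odd (wt x) := by
  rw [dotProduct_self_eq_wt, ZMod.natCast_eq_one_iff_odd]

theorem IsSelfDual.mem_iff {C : Submodule (ZMod 2) (Fin n → ZMod 2)} (hC : IsSelfDual C)
    {x : Fin n → ZMod 2} : x ∈ C ↔ ∀ y ∈ C, x ⬝ᵥ y = 0 :=
  Set.ext_iff.1 hC x

theorem IsSelfDual.one_mem {C : Submodule (ZMod 2) (Fin n → ZMod 2)} (hC : IsSelfDual C) :
    (1 : Fin n → ZMod 2) ∈ C := by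
  refine hC.mem_iff.2 fun y hy => ?_
  rw [dotProduct_comm, dotProduct_one_eq_dotProduct_self]
  exact hC.mem_iff.1 hy y hy

end Duality

section LeadingCoordinates

variable {n : ℕ}

theorem cons_cons_dotProduct_cons_cons {R : Type*} [NonUnitalNonAssocSemiring R]
    (a b a' b' : R) (x x' : Fin n → R) :
    (Fin.cons a (Fin.cons b x) : Fin (n + 2) → R) ⬝ᵥ Fin.cons a' (Fin.cons b' x') =
      a * a' + b * b' + x ⬝ᵥ x' := by
  simp [dotProduct, Fin.sum_univ_succ, add_assoc]

theorem cons_cons_mem_ext2 {a b a' b' : ZMod 2} {x : Fin n → ZMod 2} {D : Set (Fin n → ZMod 2)} :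
    Fin.cons a (Fin.cons b x) ∈ ext2 a' b' D ↔ a = a' ∧ b = b' ∧ x ∈ D := by
  simp only [ext2, Set.mem_image, Fin.cons_inj]
  grind

end LeadingCoordinates

section CosetSlice

variable {n : ℕ} {C : Submodule (ZMod 2) (Fin n → ZMod 2)} {s t u v w : Fin n → ZMod 2}
  {a : ZMod 2}

/-- The part of the coset `s + C` on which the inner product with `t` takes the value `a`. -/
def cosetSlice (C : Submodule (ZMod 2) (Fin n → ZMod 2)) (s t : Fin n → ZMod 2) (a : ZMod 2) :
    Set (Fin n → ZMod 2) :=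
  {x | x - s ∈ C ∧ t ⬝ᵥ x = a}

theorem cosetSlice_congr (hv : v - s ∈ C) : cosetSlice C v t a = cosetSlice C s t a := by
  ext x
  rw [cosetSlice, cosetSlice, Set.mem_ofPred_eq, Set.mem_ofPred_eq, ← sub_add_sub_cancel x v s,
    C.add_mem_iff_left hv]

theorem orthSub_eq_cosetSlice : orthSub C t = cosetSlice C 0 t 0 := by
  simp only [cosetSlice, sub_zero]
  rfl

theorem add_image_orthSub : (v + ·) '' orthSub C t = cosetSlice C v t (t ⬝ᵥ v) := by
  ext x
  simp [orthSub_eq_cosetSlice, cosetSlice, neg_add_eq_sub, dotProduct_sub, sub_eq_zero]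

theorem mem_add_image_iff {G : Type*} [AddCommGroup G] {s x : G} {D : Set G} :
    x ∈ (s + ·) '' D ↔ x - s ∈ D := by
  simp [neg_add_eq_sub]

theorem self_mem_add_image_orthSub : v ∈ (v + ·) '' orthSub C t := by
  rw [add_image_orthSub]
  exact ⟨by simp, rfl⟩

theorem add_image_orthSub_eq_cosetSlice_of_union (hu : u ∈ C) (htu : t ⬝ᵥ u = 1)
    (h : (s + ·) '' (C : Set (Fin n → ZMod 2)) =
      (v + ·) '' orthSub C t ∪ (w + ·) '' orthSub C t) :
    (v + ·) '' orthSub C t = cosetSlice C s t (t ⬝ᵥ v) ∧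
      (w + ·) '' orthSub C t = cosetSlice C s t (t ⬝ᵥ v + 1) := by
  have hv : v - s ∈ C := mem_add_image_iff.1 (h ▸ Or.inl self_mem_add_image_orthSub)
  have hw : w - s ∈ C := mem_add_image_iff.1 (h ▸ Or.inr self_mem_add_image_orthSub)
  have values (x) (hx : x - s ∈ C) : t ⬝ᵥ x = t ⬝ᵥ v ∨ t ⬝ᵥ x = t ⬝ᵥ w := by
    have hx' := mem_add_image_iff.2 hx
    rw [h, add_image_orthSub, add_image_orthSub] at hx'
    exact hx'.imp And.right And.right
  -- Both values occur on `s + C`, at `s` and at `s + u`, so the two cosets carry different ones.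
  have hvw : t ⬝ᵥ w = t ⬝ᵥ v + 1 := by
    have hs := values s (by simp)
    have hsu := values (s + u) (by simpa using hu)
    rw [dotProduct_add, htu] at hsu
    generalize t ⬝ᵥ s = p, t ⬝ᵥ v = q, t ⬝ᵥ w = r at hs hsu ⊢
    decide +revert
  rw [add_image_orthSub, add_image_orthSub, cosetSlice_congr hv, cosetSlice_congr hw, hvw]
  exact ⟨rfl, rfl⟩

end CosetSlice

section GlueCode

variable {n : ℕ} {C : Submodule (ZMod 2) (Fin n → ZMod 2)} {t u x : Fin n → ZMod 2}
  {a b e : ZMod 2}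

/-- Tsai's code `C⁺(t)`, written by one formula for all four pairs of leading coordinates; the
parameter `e` is the value of the inner product with `t` on the coset that receives `(0, 1)`. -/
def glueCode (C : Submodule (ZMod 2) (Fin n → ZMod 2)) (t : Fin n → ZMod 2) (e : ZMod 2) :
    Set (Fin (n + 2) → ZMod 2) :=
  ⋃ (a : ZMod 2) (b : ZMod 2), ext2 a b (cosetSlice C ((a + b) • t) t (a + (a + b) * e))

theorem cons_cons_mem_glueCode : Fin.cons a (Fin.cons b x) ∈ glueCode C t e ↔
    x - (a + b) • t ∈ C ∧ t ⬝ᵥ x = a + (a + b) * e := by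
  simp [glueCode, cons_cons_mem_ext2, cosetSlice]

theorem glueCode_eq_union : glueCode C t e =
    ext2 0 0 (cosetSlice C 0 t 0) ∪ ext2 1 1 (cosetSlice C 0 t 1) ∪
      ext2 0 1 (cosetSlice C t t e) ∪ ext2 1 0 (cosetSlice C t t (e + 1)) := by
  have iUnion_zmod_two (D : ZMod 2 → Set (Fin (n + 2) → ZMod 2)) : ⋃ a, D a = D 0 ∪ D 1 := by
    ext z
    exact Set.mem_iUnion.trans Fin.exists_fin_two
  simp only [glueCode, iUnion_zmod_two, CharTwo.add_self_eq_zero, add_zero, zero_add,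
    zero_smul, one_smul, zero_mul, one_mul, add_comm 1 e]
  ac_rfl

theorem glueCode_subset_dualSet (hC : IsSelfDual C) (htt : t ⬝ᵥ t = 1) :
    glueCode C t e ⊆ dualSet (glueCode C t e) := by
  refine Fin.forall_fin_succ_pi.2 fun a => Fin.forall_fin_succ_pi.2 fun b x hx => ?_
  refine Fin.forall_fin_succ_pi.2 fun a' => Fin.forall_fin_succ_pi.2 fun b' x' hx' => ?_
  rw [cons_cons_mem_glueCode] at hx hx'
  have h := hC.mem_iff.1 hx.1 _ hx'.1
  simp only [sub_dotProduct, dotProduct_sub, smul_dotProduct, dotProduct_smul, smul_eq_mul,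
    dotProduct_comm x t, hx.2, hx'.2, htt] at h
  have hxx' : x ⬝ᵥ x' = a * a' + b * b' := by grind
  refine (cons_cons_dotProduct_cons_cons ..).trans ?_
  rw [hxx', CharTwo.add_self_eq_zero]

theorem dualSet_glueCode_subset (hC : IsSelfDual C) (htt : t ⬝ᵥ t = 1) (hu : u ∈ C)
    (htu : t ⬝ᵥ u = 1) : dualSet (glueCode C t e) ⊆ glueCode C t e := by
  refine Fin.forall_fin_succ_pi.2 fun a => Fin.forall_fin_succ_pi.2 fun b x hx => ?_
  have orth {a' b' : ZMod 2} {y : Fin n → ZMod 2}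
      (hy : Fin.cons a' (Fin.cons b' y) ∈ glueCode C t e) : a * a' + b * b' + x ⬝ᵥ y = 0 :=
    (cons_cons_dotProduct_cons_cons ..).symm.trans (hx _ hy)
  have hxC : x - (a + b) • t ∈ C := by
    refine hC.mem_iff.2 fun c hc => ?_
    have hcc : Fin.cons (t ⬝ᵥ c) (Fin.cons (t ⬝ᵥ c) c) ∈ glueCode C t e := by
      simpa [cons_cons_mem_glueCode, CharTwo.add_self_eq_zero] using hc
    have hxc : x ⬝ᵥ c = (a + b) * (t ⬝ᵥ c) := by grind [orth hcc]
    rw [sub_dotProduct, smul_dotProduct, smul_eq_mul, hxc, sub_self]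
  have hw : Fin.cons 0 (Fin.cons 1 (t + (e + 1) • u)) ∈ glueCode C t e := by
    have htw : t ⬝ᵥ (t + (e + 1) • u) = e := by
      rw [dotProduct_add, dotProduct_smul, smul_eq_mul, htt, htu]
      grind
    simpa [cons_cons_mem_glueCode, htw] using C.smul_mem (e + 1) hu
  have hxu : x ⬝ᵥ u = a + b := by
    simpa [sub_dotProduct, htu, sub_eq_zero] using hC.mem_iff.1 hxC u hu
  have hxw : b + t ⬝ᵥ x + (e + 1) * (a + b) = 0 := by
    simpa [dotProduct_add, dotProduct_comm x t, hxu, add_assoc] using orth hw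
  exact cons_cons_mem_glueCode.2 ⟨hxC, by grind⟩

theorem isSelfDualSet_glueCode (hC : IsSelfDual C) (htt : t ⬝ᵥ t = 1) (hu : u ∈ C)
    (htu : t ⬝ᵥ u = 1) : IsSelfDualSet (glueCode C t e) :=
  (glueCode_subset_dualSet hC htt).antisymm (dualSet_glueCode_subset hC htt hu htu)

end GlueCode

theorem tsai_extension_general (n : ℕ) (C : Submodule (ZMod 2) (Fin n → ZMod 2))
    (hsd : IsSelfDual C) (t : Fin n → ZMod 2) (htodd : ¬ 2 ∣ wt t)
    (C1 C2 C3 : Set (Fin n → ZMod 2))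
    (hc1 : ∃ v, C1 = (v + ·) '' orthSub C t)
    (hc2 : ∃ v, C2 = (v + ·) '' orthSub C t)
    (hc3 : ∃ v, C3 = (v + ·) '' orthSub C t)
    (hC : (C : Set (Fin n → ZMod 2)) = orthSub C t ∪ C2)
    (hT : (t + ·) '' (C : Set (Fin n → ZMod 2)) = C1 ∪ C3) :
    IsSelfDualSet (ext2 0 0 (orthSub C t) ∪ ext2 1 1 C2 ∪ ext2 0 1 C1 ∪ ext2 1 0 C3) := by
  obtain ⟨v₁, rfl⟩ := hc1
  obtain ⟨v₂, rfl⟩ := hc2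
  obtain ⟨v₃, rfl⟩ := hc3
  have htt : t ⬝ᵥ t = 1 :=
    dotProduct_self_eq_one_iff_odd_wt.2 (Nat.not_even_iff_odd.1 (mt Even.two_dvd htodd))
  have ht1 : t ⬝ᵥ 1 = 1 := (dotProduct_one_eq_dotProduct_self t).trans htt
  have hC' : (0 + ·) '' (C : Set (Fin n → ZMod 2)) =
      (0 + ·) '' orthSub C t ∪ (v₂ + ·) '' orthSub C t := by
    simpa only [zero_add, Set.image_id'] using hC
  have h2 := (add_image_orthSub_eq_cosetSlice_of_union hsd.one_mem ht1 hC').2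
  obtain ⟨h1, h3⟩ := add_image_orthSub_eq_cosetSlice_of_union hsd.one_mem ht1 hT
  rw [dotProduct_zero, zero_add] at h2
  rw [h1, h2, h3, orthSub_eq_cosetSlice, ← glueCode_eq_union]
  exact isSelfDualSet_glueCode hsd htt hsd.one_mem ht1

/-- Tsai's construction: for a singly even self-dual code `C` of length `n`, a vector `t`
of odd weight, `C⁰` the subcode of codewords orthogonal to `t`, and cosets `C¹, C², C³` of
`C⁰` with `(C⁰)^⊥ = C⁰ ∪ C¹ ∪ C² ∪ C³`, `C = C⁰ ∪ C²` and `t + C = C¹ ∪ C³`, the code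
`C⁺(t) = (0,0,C⁰) ∪ (1,1,C²) ∪ (0,1,C¹) ∪ (1,0,C³)` is a self-dual code of length `n+2`. -/
theorem tsai_extension (n : ℕ) (C : Submodule (ZMod 2) (Fin n → ZMod 2))
    (hse : IsSinglyEvenSelfDual C)
    (t : Fin n → ZMod 2) (htodd : ¬ 2 ∣ wt t)
    (C1 C2 C3 : Set (Fin n → ZMod 2))
    (hc1 : ∃ v, C1 = (v + ·) '' orthSub C t)
    (hc2 : ∃ v, C2 = (v + ·) '' orthSub C t)
    (hc3 : ∃ v, C3 = (v + ·) '' orthSub C t)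
    (hdual : dualSet (orthSub C t) = orthSub C t ∪ C1 ∪ C2 ∪ C3)
    (hC : (C : Set (Fin n → ZMod 2)) = orthSub C t ∪ C2)
    (hT : (t + ·) '' (C : Set (Fin n → ZMod 2)) = C1 ∪ C3) :
    IsSelfDualSet (ext2 0 0 (orthSub C t) ∪ ext2 1 1 C2 ∪ ext2 0 1 C1 ∪ ext2 1 0 C3) :=
  tsai_extension_general n C hse.1 t htodd C1 C2 C3 hc1 hc2 hc3 hC hT
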